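/- Let b ≥ β > 0 and let f : 𝔻 → ℝ be defined by f(r·e^{iθ}) = (1/(r(1−r)^{b−β}))·sin(1/(1−r)^b) for 1/2 ≤ r < 1 and f(r·e^{iθ}) = 1 for 0 ≤ r < 1/2. Then there exist r₀ ∈ (0,1) and a constant C > 0 such that for every z = r·e^{iθ} ∈ 𝔻 with r ≥ r₀, one has |∫_{D(z,1)} f dA| ≤ C·(1−r)^{2+β}; in particular the hyperbolic average f̂₁(z) = (1/|D(z,1)|)∫_{D(z,1)} f dA satisfies |f̂₁(z)| ≤ C'·(1−r)^β for some constant C' > 0, so f̂₁(z) → 0 as |z| → 1. -/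

import Mathlib

open MeasureTheory Set

noncomputable section

/-- The normalized area measure on the plane: planar Lebesgue measure divided by `π`. -/
def dA : Measure ℂ := (ENNReal.ofReal Real.pi)⁻¹ • volume

/-- The open unit disc `𝔻`. -/
def unitDisc : Set ℂ := {z : ℂ | ‖z‖ < 1}

/-- The argument `θ` of `z`, normalized to lie in `[0, 2π)`. -/
def theta (z : ℂ) : ℝ := toIcoMod Real.two_pi_pos 0 (Complex.arg z)

/-- The angle of `ζ`, normalized to lie in `[theta z, theta z + 2π)`;
for `ζ ∈ B(z)` this is the angle `θ̃ ∈ [θ, θ + π(1-r)]` of the paper's convention. -/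
def angFrom (z ζ : ℂ) : ℝ := toIcoMod Real.two_pi_pos (theta z) (Complex.arg ζ)

/-- The polar rectangle `{ρ e^{iφ} : r₁ ≤ ρ ≤ r₂, φ₁ ≤ φ ≤ φ₂}`. -/
def polarRect (r₁ r₂ φ₁ φ₂ : ℝ) : Set ℂ :=
  {w : ℂ | ∃ ρ φ : ℝ, r₁ ≤ ρ ∧ ρ ≤ r₂ ∧ φ₁ ≤ φ ∧ φ ≤ φ₂ ∧
    w = (ρ : ℂ) * Complex.exp ((φ : ℂ) * Complex.I)}

/-- The set `B(z)` for `z = r e^{iθ} ∈ 𝔻`. -/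
def Bz (z : ℂ) : Set ℂ :=
  polarRect ‖z‖ (1 - (1 - ‖z‖) / 2) (theta z) (theta z + Real.pi * (1 - ‖z‖))

/-- The set `B(z, ζ)` for `ζ ∈ B(z)`. -/
def Bzz (z ζ : ℂ) : Set ℂ := polarRect ‖z‖ ‖ζ‖ (theta z) (angFrom z ζ)

/-- The set `B(ζ₁, ζ₂)` for points `ζ₁ ≾ ζ₂` of `B(z)`. -/
def Bsub (z ζ₁ ζ₂ : ℂ) : Set ℂ := polarRect ‖ζ₁‖ ‖ζ₂‖ (angFrom z ζ₁) (angFrom z ζ₂)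

/-- The relation `ζ₁ ≾ ζ₂` for points of `B(z)`: `ρ₁ ≤ ρ₂` and `φ₁ ≤ φ₂`. -/
def precSim (z ζ₁ ζ₂ : ℂ) : Prop := ‖ζ₁‖ ≤ ‖ζ₂‖ ∧ angFrom z ζ₁ ≤ angFrom z ζ₂

/-- The average `f̂_K = (1/|K|) ∫_K f dA` of `f` over a set `K`. -/
def avgOn (f : ℂ → ℂ) (K : Set ℂ) : ℂ := ((dA K).toReal)⁻¹ • ∫ w in K, f w ∂dA

/-- The average function `f̂(z) = f̂_{B(z)}`. -/
def avg (f : ℂ → ℂ) (z : ℂ) : ℂ := avgOn f (Bz z)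

/-- The quantity `(1/|B(z)|) |∫_{B(z,ζ)} (f(ξ) - f̂(z)) dA(ξ)|`. -/
def wQuot (f : ℂ → ℂ) (z ζ : ℂ) : ℝ :=
  ((dA (Bz z)).toReal)⁻¹ * ‖∫ ξ in Bzz z ζ, (f ξ - avg f z) ∂dA‖

/-- The BWMO condition: `‖f‖_BWMO < ∞`. -/
def IsBWMO (f : ℂ → ℂ) : Prop := ∃ C : ℝ, ∀ z ∈ unitDisc, ∀ ζ ∈ Bz z, wQuot f z ζ ≤ C

/-- The BWMO seminorm `‖f‖_BWMO`. -/
def bwmoNorm (f : ℂ → ℂ) : ℝ :=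
  sSup {c : ℝ | ∃ z ∈ unitDisc, ∃ ζ ∈ Bz z, c = wQuot f z ζ}

/-- The VWMO condition:
`(1/|B(z)|) sup_{ζ ∈ B(z)} |∫_{B(z,ζ)} (f - f̂(z)) dA| → 0` as `|z| → 1`. -/
def IsVWMO (f : ℂ → ℂ) : Prop :=
  ∀ ε > (0:ℝ), ∃ r₀ < (1:ℝ), ∀ z ∈ unitDisc, r₀ ≤ ‖z‖ → ∀ ζ ∈ Bz z, wQuot f z ζ ≤ ε

/-- The Bergman-metric disc `D(z,1)` of radius `1` centered at `z`. -/
def Dball (z : ℂ) : Set ℂ :=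
  {w : ℂ | ‖w‖ < 1 ∧ ‖(z - w) / (1 - (starRingEnd ℂ) w * z)‖ < Real.tanh 1}

/-- The hyperbolic average `f̂₁(z) = (1/|D(z,1)|) ∫_{D(z,1)} f dA` of a real-valued `f`. -/
def avg1 (f : ℂ → ℝ) (z : ℂ) : ℝ := ((dA (Dball z)).toReal)⁻¹ * ∫ w in Dball z, f w ∂dA

/-- The mean oscillation `(1/|D(z,1)|) ∫_{D(z,1)} |f - f̂₁(z)| dA` of a real-valued `f`. -/
def meanOsc1 (f : ℂ → ℝ) (z : ℂ) : ℝ :=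
  ((dA (Dball z)).toReal)⁻¹ * ∫ ξ in Dball z, |f ξ - avg1 f z| ∂dA

/-- The Berezin transform `f̃(z) = ∫_𝔻 f(w) |k_z(w)|² dA(w)`,
where `k_z(w) = (1-|z|²)/(1-w z̄)²`. -/
def berezin (f : ℂ → ℂ) (z : ℂ) : ℂ :=
  ∫ w in unitDisc, f w * ((((1 - ‖z‖ ^ 2) ^ 2 / ‖1 - w * (starRingEnd ℂ) z‖ ^ 4 : ℝ)) : ℂ) ∂dA

/-- The example symbol of Section 4:
`f(r e^{iθ}) = (1/(r (1-r)^{b-β})) sin(1/(1-r)^b)` for `r ≥ 1/2`, and `1` for `r < 1/2`. -/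
def fEx (b β : ℝ) (z : ℂ) : ℝ :=
  if ‖z‖ < 1 / 2 then 1
  else (1 / (‖z‖ * (1 - ‖z‖) ^ (b - β))) * Real.sin (1 / (1 - ‖z‖) ^ b)

end

/-!
The disc `D(z, 1)` is a Euclidean disc whose radius and whose distance to the unit circle are both
comparable to `1 - |z|`. Since `f` is radial, rotate the center onto the positive real axis and
integrate in polar coordinates: each ray meets the disc in an interval, and the weight `ρ` cancels
the factor `1 / ρ` of `f`. The derivative of `cos ((1 - ρ)⁻ᵇ)` is of order `(1 - ρ)^(-b - 1)`, so
integrating by parts against it bounds the integral along each ray by a multiple of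
`(1 - |z|)^(1 + β)`. The rays that meet the disc fill an angle `O(1 - |z|)`, which supplies the
remaining factor.
-/

lemma norm_integral_smul_deriv_le_of_deriv_nonpos {E : Type*} [NormedAddCommGroup E]
    [NormedSpace ℝ E] [CompleteSpace E] {u u' : ℝ → ℝ} {v v' : ℝ → E} {c d M : ℝ} (hcd : c ≤ d)
    (hu : ∀ x ∈ uIcc c d, HasDerivAt u (u' x) x) (hv : ∀ x ∈ uIcc c d, HasDerivAt v (v' x) x)
    (hu' : IntervalIntegrable u' volume c d) (hv' : IntervalIntegrable v' volume c d)
    (hu'_nonpos : ∀ x ∈ uIcc c d, u' x ≤ 0) (hud : 0 ≤ u d) (hvM : ∀ x ∈ uIcc c d, ‖v x‖ ≤ M) :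
    ‖∫ x in c..d, u x • v' x‖ ≤ 2 * M * u c := by
  have integral_u' : ∫ x in c..d, u' x = u d - u c :=
    intervalIntegral.integral_eq_sub_of_hasDerivAt hu hu'
  have hudc : u d ≤ u c := by
    have := intervalIntegral.integral_nonneg hcd (f := fun x ↦ -u' x) (μ := volume)
      fun x hx ↦ neg_nonneg.2 (hu'_nonpos x (uIcc_of_le hcd ▸ hx))
    rw [intervalIntegral.integral_neg, integral_u'] at this
    linarith
  have norm_integral_le : ‖∫ x in c..d, u' x • v x‖ ≤ M * (u c - u d) :=
    calc ‖∫ x in c..d, u' x • v x‖ ≤ ∫ x in c..d, -u' x * M := by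
          refine intervalIntegral.norm_integral_le_of_norm_le hcd (.of_forall fun x hx ↦ ?_)
            (hu'.neg.mul_const M)
          have hx' : x ∈ uIcc c d := uIcc_of_le hcd ▸ Ioc_subset_Icc_self hx
          rw [norm_smul, Real.norm_of_nonpos (hu'_nonpos x hx')]
          exact mul_le_mul_of_nonneg_left (hvM x hx') (neg_nonneg.2 (hu'_nonpos x hx'))
      _ = M * (u c - u d) := by
          rw [intervalIntegral.integral_mul_const, intervalIntegral.integral_neg, integral_u']
          ring
  have norm_boundary_le : ∀ x ∈ uIcc c d, 0 ≤ u x → ‖u x • v x‖ ≤ u x * M := fun x hx hux ↦ by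
    rw [norm_smul, Real.norm_of_nonneg hux]
    exact mul_le_mul_of_nonneg_left (hvM x hx) hux
  rw [intervalIntegral.integral_smul_deriv_eq_deriv_smul hu hv hu' hv']
  calc ‖u d • v d - u c • v c - ∫ x in c..d, u' x • v x‖
      ≤ ‖u d • v d‖ + ‖u c • v c‖ + ‖∫ x in c..d, u' x • v x‖ :=
        (norm_sub_le _ _).trans (add_le_add_left (norm_sub_le _ _) _)
    _ ≤ u d * M + u c * M + M * (u c - u d) :=
        add_le_add_three (norm_boundary_le d right_mem_uIcc hud)
          (norm_boundary_le c left_mem_uIcc (hud.trans hudc)) norm_integral_le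
    _ = 2 * M * u c := by ring

-- Up to the factor `-1 / b`, the integrand is `(1 - x) ^ (1 + β)` times the derivative of
-- `cos ((1 - x) ^ (-b))`.
lemma abs_integral_one_sub_rpow_mul_sin_le {b β c d : ℝ} (hb : b ≠ 0) (hβ : -1 ≤ β)
    (hcd : c ≤ d) (hd : d < 1) :
    |∫ x in c..d, (1 - x) ^ (β - b) * Real.sin (1 / (1 - x) ^ b)| ≤
      2 / |b| * (1 - c) ^ (1 + β) := by
  have one_sub_pos : ∀ x ∈ uIcc c d, 0 < 1 - x := fun x hx ↦ by
    linarith [(uIcc_of_le hcd ▸ hx : x ∈ Icc c d).2]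
  have hasDerivAt_rpow : ∀ p : ℝ, ∀ x ∈ uIcc c d,
      HasDerivAt (fun x : ℝ ↦ (1 - x) ^ p) (-1 * p * (1 - x) ^ (p - 1)) x := fun p x hx ↦
    ((hasDerivAt_id x).const_sub 1).rpow_const (Or.inl (one_sub_pos x hx).ne')
  have continuousOn_rpow : ∀ p : ℝ, ContinuousOn (fun x : ℝ ↦ (1 - x) ^ p) (uIcc c d) :=
    fun p x hx ↦ (hasDerivAt_rpow p x hx).continuousAt.continuousWithinAt
  have hβ' : 0 ≤ 1 + β := by linarith
  have by_parts := norm_integral_smul_deriv_le_of_deriv_nonpos (M := 1) hcd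
    (hasDerivAt_rpow (1 + β)) (fun x hx ↦ (hasDerivAt_rpow (-b) x hx).cos)
    (continuousOn_const.mul (continuousOn_rpow _)).intervalIntegrable
    ((Real.continuous_sin.comp_continuousOn (continuousOn_rpow (-b))).neg.mul
      (continuousOn_const.mul (continuousOn_rpow _))).intervalIntegrable
    (fun x hx ↦ by
      have := Real.rpow_nonneg (one_sub_pos x hx).le (1 + β - 1)
      nlinarith [mul_nonneg hβ' this])
    (Real.rpow_nonneg (one_sub_pos d right_mem_uIcc).le _)
    (fun x _ ↦ Real.abs_cos_le_one _)
  have integrand_eq : ∀ x ∈ uIcc c d, (1 - x) ^ (β - b) * Real.sin (1 / (1 - x) ^ b) =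
      -(1 / b) * ((1 - x) ^ (1 + β) •
        (-Real.sin ((1 - x) ^ (-b)) * (-1 * -b * (1 - x) ^ (-b - 1)))) := fun x hx ↦ by
    have hx := one_sub_pos x hx
    rw [show β - b = (1 + β) + (-b - 1) by ring, Real.rpow_add hx, one_div ((1 - x) ^ b),
      ← Real.rpow_neg hx.le, smul_eq_mul]
    field_simp
  rw [intervalIntegral.integral_congr integrand_eq, intervalIntegral.integral_const_mul, abs_mul,
    abs_neg, abs_div, abs_one, ← Real.norm_eq_abs (∫ _ in _.._, _)]
  calc 1 / |b| * _ ≤ 1 / |b| * (2 * 1 * (1 - c) ^ (1 + β)) := by gcongr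
    _ = 2 / |b| * (1 - c) ^ (1 + β) := by ring

section RadialIntegral

variable {E : Type*} [NormedAddCommGroup E] [NormedSpace ℝ E]

lemma norm_setIntegral_le_of_ordConnected {h : ℝ → E} {m M A : ℝ} {I : Set ℝ}
    (hI : I.OrdConnected) (hsub : I ⊆ Icc m M) (hA : 0 ≤ A)
    (hintervals : ∀ c d, m ≤ c → c ≤ d → d ≤ M → ‖∫ x in c..d, h x‖ ≤ A) :
    ‖∫ x in I, h x‖ ≤ A := by
  rcases I.eq_empty_or_nonempty with rfl | hne
  · simpa only [setIntegral_empty, norm_zero] using hA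
  have hbelow : BddBelow I := bddBelow_Icc.mono hsub
  have habove : BddAbove I := bddAbove_Icc.mono hsub
  have hae : I =ᵐ[volume] Ioc (sInf I) (sSup I) := by
    refine Filter.EventuallyLE.antisymm ?_ ?_
    · exact (subset_Icc_csInf_csSup hbelow habove).eventuallyLE.trans Ioc_ae_eq_Icc.symm.le
    · exact Ioo_ae_eq_Ioc.symm.le.trans
        (IsConnected.Ioo_csInf_csSup_subset ⟨hne, hI.isPreconnected⟩ hbelow habove).eventuallyLE
  have hle : sInf I ≤ sSup I := csInf_le_csSup hne hbelow habove
  rw [setIntegral_congr_set hae, ← intervalIntegral.integral_of_le hle]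
  exact hintervals _ _ (le_csInf hne fun x hx ↦ (hsub hx).1) hle
    (csSup_le hne fun x hx ↦ (hsub hx).2)

/-- The radii at which the open ray from the origin with angle `θ` meets `D`: the domain of the
inner integral when integrating over `D` in polar coordinates. -/
def radialSlice (D : Set ℂ) (θ : ℝ) : Set ℝ :=
  {ρ | 0 < ρ ∧ Complex.polarCoord.symm (ρ, θ) ∈ D}

lemma measurableSet_radialSlice {D : Set ℂ} (hD : MeasurableSet D) (θ : ℝ) :
    MeasurableSet (radialSlice D θ) := by
  have : Measurable fun ρ : ℝ ↦ Complex.polarCoord.symm (ρ, θ) := by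
    simp only [Complex.polarCoord_symm_apply]
    fun_prop
  exact measurableSet_Ioi.inter (this hD)

lemma convex_radialSlice {D : Set ℂ} (hD : Convex ℝ D) (θ : ℝ) : Convex ℝ (radialSlice D θ) := by
  have : IsLinearMap ℝ fun ρ : ℝ ↦ Complex.polarCoord.symm (ρ, θ) := by
    constructor <;> intros <;> simp only [Complex.polarCoord_symm_apply] <;> simp <;> ring
  exact (convex_Ioi 0).inter (hD.is_linear_preimage this)

lemma radialSlice_ball_subset (a : ℂ) (R θ : ℝ) :
    radialSlice (Metric.ball a R) θ ⊆ Icc (‖a‖ - R) (‖a‖ + R) := by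
  rintro ρ ⟨hρ, hmem⟩
  have hdist := (abs_norm_sub_norm_le _ _).trans_lt (mem_ball_iff_norm.1 hmem)
  rw [Complex.norm_polarCoord_symm, abs_of_pos hρ, abs_lt] at hdist
  constructor <;> linarith

lemma norm_setIntegral_le_of_norm_integral_radialSlice_le {f : ℂ → E} {D : Set ℂ} {A δ : ℝ}
    (hD : MeasurableSet D) (hδ : 0 ≤ δ) (harg : ∀ w ∈ D, |w.arg| ≤ δ)
    (hslice : ∀ θ, ‖∫ ρ in radialSlice D θ, ρ • f (Complex.polarCoord.symm (ρ, θ))‖ ≤ A) :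
    ‖∫ w in D, f w‖ ≤ 2 * δ * A := by
  have hA : 0 ≤ A := (norm_nonneg _).trans (hslice 0)
  set F : ℝ × ℝ → E := fun p ↦ p.1 • D.indicator f (Complex.polarCoord.symm p)
  have inner_eq : ∀ θ, ∫ ρ in Ioi 0, F (ρ, θ) =
      ∫ ρ in radialSlice D θ, ρ • f (Complex.polarCoord.symm (ρ, θ)) := fun θ ↦ by
    rw [← integral_indicator measurableSet_Ioi,
      ← integral_indicator (measurableSet_radialSlice hD θ)]
    congr with ρ
    simp only [F, radialSlice, indicator, mem_Ioi, mem_ofPred_eq, smul_ite, smul_zero]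
    grind
  have inner_le : ∀ θ ∈ Ioo (-Real.pi) Real.pi,
      ‖∫ ρ in Ioi 0, F (ρ, θ)‖ ≤ (Icc (-δ) δ).indicator (fun _ ↦ A) θ := fun θ hθ ↦ by
    by_cases hθδ : θ ∈ Icc (-δ) δ
    · rw [inner_eq, indicator_of_mem hθδ]
      exact hslice θ
    · have : radialSlice D θ = ∅ := eq_empty_of_forall_notMem fun ρ hρ ↦ hθδ <| abs_le.1 <| by
        simpa only [Complex.polarCoord_symm_apply,
          Complex.arg_mul_cos_add_sin_mul_I hρ.1 (Ioo_subset_Ioc_self hθ), Complex.ofReal_cos,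
          Complex.ofReal_sin] using harg _ hρ.2
      rw [inner_eq, this, setIntegral_empty, norm_zero, indicator_of_notMem hθδ]
  rw [← integral_indicator hD, ← Complex.integral_comp_polarCoord_symm]
  change ‖∫ p in Ioi 0 ×ˢ Ioo (-Real.pi) Real.pi, F p‖ ≤ _
  rw [Measure.volume_eq_prod, ← Measure.prod_restrict]
  -- If `F` is not integrable, its integral is `0` by convention.
  by_cases hF : Integrable F
      ((volume.restrict (Ioi 0)).prod (volume.restrict (Ioo (-Real.pi) Real.pi)))
  swap
  · rw [integral_undef hF, norm_zero]
    positivity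
  have hconst : Integrable ((Icc (-δ) δ).indicator fun _ ↦ A) :=
    (integrable_indicator_iff measurableSet_Icc).2 (integrableOn_const (by simp))
  calc ‖∫ p, F p ∂_‖ = ‖∫ θ in Ioo (-Real.pi) Real.pi, ∫ ρ in Ioi 0, F (ρ, θ)‖ := by
        rw [integral_prod_symm _ hF]
    _ ≤ ∫ θ in Ioo (-Real.pi) Real.pi, (Icc (-δ) δ).indicator (fun _ ↦ A) θ :=
        norm_integral_le_of_norm_le hconst.integrableOn
          (ae_restrict_of_forall_mem measurableSet_Ioo inner_le)
    _ ≤ ∫ θ, (Icc (-δ) δ).indicator (fun _ ↦ A) θ :=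
        setIntegral_le_integral hconst (.of_forall (indicator_nonneg fun _ _ ↦ hA))
    _ = 2 * δ * A := by
        rw [integral_indicator measurableSet_Icc, setIntegral_const,
          Real.volume_real_Icc_of_le (by linarith), smul_eq_mul]
        ring

lemma abs_arg_le_of_mem_ball {x R : ℝ} {w : ℂ} (hR : R ≤ x) (hw : w ∈ Metric.ball (x : ℂ) R) :
    |w.arg| ≤ Real.pi / 2 * (R / x) := by
  rw [mem_ball_iff_norm] at hw
  have hx : 0 < x := ((norm_nonneg _).trans_lt hw).trans_le hR
  have hre : 0 ≤ w.re := by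
    have := (abs_le.1 (Complex.abs_re_le_norm (w - x))).1
    rw [Complex.sub_re, Complex.ofReal_re] at this
    linarith
  have sin_le : x * |Real.sin w.arg| ≤ ‖w - x‖ := by
    refine abs_le_of_sq_le_sq' ?_ (norm_nonneg _) |>.2
    rw [mul_pow, sq_abs, Real.sin_sq, ← Complex.normSq_eq_norm_sq, Complex.normSq_apply,
      Complex.sub_re, Complex.sub_im, Complex.ofReal_re, Complex.ofReal_im]
    have hre_eq := Complex.norm_mul_cos_arg w
    have hnorm := Complex.sq_norm_sub_sq_re w
    nlinarith [sq_nonneg (‖w‖ - x * Real.cos w.arg)]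
  have jordan := Real.mul_abs_le_abs_sin (Complex.abs_arg_le_pi_div_two_iff.2 hre)
  have : 2 / Real.pi * |w.arg| ≤ R / x := by
    rw [le_div_iff₀' hx]
    exact (mul_le_mul_of_nonneg_left jordan hx.le).trans (sin_le.trans hw.le)
  calc |w.arg| = Real.pi / 2 * (2 / Real.pi * |w.arg|) := by field_simp
    _ ≤ Real.pi / 2 * (R / x) := by gcongr

lemma setIntegral_ball_comp_norm_eq {F : Type*} [NormedAddCommGroup F] [InnerProductSpace ℝ F]
    [FiniteDimensional ℝ F] [MeasurableSpace F] [BorelSpace F] (g : ℝ → E) {a a' : F}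
    (haa' : ‖a‖ = ‖a'‖) (R : ℝ) :
    ∫ w in Metric.ball a R, g ‖w‖ = ∫ w in Metric.ball a' R, g ‖w‖ := by
  set e : F ≃ₗᵢ[ℝ] F := Submodule.reflection (ℝ ∙ (a - a'))ᗮ
  have he : e a = a' := Submodule.reflection_sub haa'
  calc ∫ w in Metric.ball a R, g ‖w‖ = ∫ w in e ⁻¹' Metric.ball a' R, g ‖e w‖ := by
        simp only [← he, e.isometry.preimage_ball, e.norm_map]
    _ = ∫ w in Metric.ball a' R, g ‖w‖ :=
        e.measurePreserving.setIntegral_preimage_emb e.toHomeomorph.measurableEmbedding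
          (fun w ↦ g ‖w‖) _

lemma norm_setIntegral_ball_comp_norm_le {g : ℝ → E} {a : ℂ} {R A : ℝ} (hR : 0 ≤ R)
    (hRa : R ≤ ‖a‖) (hA : ∀ c d, ‖a‖ - R ≤ c → c ≤ d → d ≤ ‖a‖ + R →
      ‖∫ ρ in c..d, ρ • g ρ‖ ≤ A) :
    ‖∫ w in Metric.ball a R, g ‖w‖‖ ≤ Real.pi * (R / ‖a‖) * A := by
  have hA0 : 0 ≤ A := (norm_nonneg _).trans (hA ‖a‖ ‖a‖ (by linarith) le_rfl (by linarith))
  have hnorm : ‖((‖a‖ : ℝ) : ℂ)‖ = ‖a‖ := by rw [Complex.norm_real, norm_norm]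
  have hslice : ∀ θ, ‖∫ ρ in radialSlice (Metric.ball (‖a‖ : ℂ) R) θ,
      ρ • g ‖Complex.polarCoord.symm (ρ, θ)‖‖ ≤ A := fun θ ↦ by
    have hint : ∀ ρ ∈ radialSlice (Metric.ball (‖a‖ : ℂ) R) θ,
        ρ • g ‖Complex.polarCoord.symm (ρ, θ)‖ = ρ • g ρ := fun ρ hρ ↦ by
      rw [Complex.norm_polarCoord_symm, abs_of_pos hρ.1]
    rw [setIntegral_congr_fun (measurableSet_radialSlice measurableSet_ball θ) hint]
    exact norm_setIntegral_le_of_ordConnected (convex_radialSlice (convex_ball _ _) θ).ordConnected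
      (radialSlice_ball_subset _ _ _) hA0 (by rwa [hnorm])
  rw [setIntegral_ball_comp_norm_eq g hnorm.symm R]
  calc ‖∫ w in Metric.ball (‖a‖ : ℂ) R, g ‖w‖‖ ≤ 2 * (Real.pi / 2 * (R / ‖a‖)) * A :=
        norm_setIntegral_le_of_norm_integral_radialSlice_le measurableSet_ball (by positivity)
          (fun w hw ↦ abs_arg_le_of_mem_ball hRa hw) hslice
    _ = Real.pi * (R / ‖a‖) * A := by ring

end RadialIntegral

lemma dA_ball (a : ℂ) (R : ℝ) : dA (Metric.ball a R) = ENNReal.ofReal R ^ 2 := by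
  have coe_pi : (NNReal.pi : ENNReal) = ENNReal.ofReal Real.pi := by
    rw [← NNReal.coe_real_pi, ENNReal.ofReal_coe_nnreal]
  rw [dA, Measure.smul_apply, Complex.volume_ball, coe_pi, smul_eq_mul, mul_comm, mul_assoc,
    ENNReal.mul_inv_cancel (by simpa using Real.pi_pos) ENNReal.ofReal_ne_top, mul_one]

lemma setIntegral_dA {E : Type*} [NormedAddCommGroup E] [NormedSpace ℝ E] (f : ℂ → E)
    (K : Set ℂ) : ∫ w in K, f w ∂dA = Real.pi⁻¹ • ∫ w in K, f w := by
  rw [dA, Measure.restrict_smul, integral_smul_measure, ENNReal.toReal_inv,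
    ENNReal.toReal_ofReal Real.pi_pos.le]

lemma abs_setIntegral_ball_fEx_le {b β R : ℝ} {a : ℂ} (hb : b ≠ 0) (hβ : -1 ≤ β) (hR : 0 ≤ R)
    (hinner : 1 / 2 ≤ ‖a‖ - R) (houter : ‖a‖ + R < 1) :
    |∫ w in Metric.ball a R, fEx b β w ∂dA| ≤ 2 / |b| * (1 - (‖a‖ - R)) ^ (2 + β) := by
  set L := 1 - (‖a‖ - R)
  have hL : 0 < L := by linarith
  set g : ℝ → ℝ := fun ρ ↦ 1 / (ρ * (1 - ρ) ^ (b - β)) * Real.sin (1 / (1 - ρ) ^ b)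
  have fEx_eq : ∀ w ∈ Metric.ball a R, fEx b β w = g ‖w‖ := fun w hw ↦ by
    have : ‖a‖ - ‖w‖ < R := by
      rw [mem_ball_iff_norm'] at hw
      exact (norm_sub_norm_le a w).trans_lt hw
    rw [fEx, if_neg (by linarith)]
  have radial_bound : ∀ c d, ‖a‖ - R ≤ c → c ≤ d → d ≤ ‖a‖ + R →
      ‖∫ ρ in c..d, ρ • g ρ‖ ≤ 2 / |b| * L ^ (1 + β) := fun c d hc hcd hd ↦ by
    have smul_g_eq : ∀ ρ ∈ uIcc c d,
        ρ • g ρ = (1 - ρ) ^ (β - b) * Real.sin (1 / (1 - ρ) ^ b) := fun ρ hρ ↦ by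
      rw [uIcc_of_le hcd] at hρ
      have hρ0 : 0 < ρ := by linarith [hρ.1]
      have hρ1 : 0 < 1 - ρ := by linarith [hρ.2]
      simp only [g]
      rw [← neg_sub b β, Real.rpow_neg hρ1.le, smul_eq_mul]
      field_simp
    rw [intervalIntegral.integral_congr smul_g_eq]
    refine (abs_integral_one_sub_rpow_mul_sin_le hb hβ hcd (by linarith)).trans ?_
    gcongr <;> linarith
  have ratio_le : R / ‖a‖ ≤ L := by
    rw [div_le_iff₀ (by linarith)]
    nlinarith
  rw [setIntegral_dA, setIntegral_congr_fun measurableSet_ball fEx_eq, smul_eq_mul, abs_mul,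
    abs_of_pos (inv_pos.2 Real.pi_pos)]
  calc Real.pi⁻¹ * |∫ w in Metric.ball a R, g ‖w‖|
      ≤ Real.pi⁻¹ * (Real.pi * (R / ‖a‖) * (2 / |b| * L ^ (1 + β))) := by
        gcongr
        exact norm_setIntegral_ball_comp_norm_le hR (by linarith) radial_bound
    _ = R / ‖a‖ * (2 / |b| * L ^ (1 + β)) := by field_simp
    _ ≤ L * (2 / |b| * L ^ (1 + β)) := by gcongr
    _ = 2 / |b| * L ^ (2 + β) := by
        rw [show 2 + β = 1 + (1 + β) by ring, Real.rpow_add hL 1 (1 + β), Real.rpow_one]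
        ring

section PseudohyperbolicDisc

/-- The Euclidean center of the pseudohyperbolic disc `{w ∈ 𝔻 : |(z - w) / (1 - conj w * z)| < s}`,
which is a Euclidean disc when `0 ≤ s < 1` and `|z| < 1`. -/
noncomputable def pseudohyperbolicCenter (s : ℝ) (z : ℂ) : ℂ :=
  ((1 - s ^ 2) / (1 - s ^ 2 * ‖z‖ ^ 2)) • z

/-- The Euclidean radius of the pseudohyperbolic disc
`{w ∈ 𝔻 : |(z - w) / (1 - conj w * z)| < s}`. -/
noncomputable def pseudohyperbolicRadius (s : ℝ) (z : ℂ) : ℝ :=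
  s * (1 - ‖z‖ ^ 2) / (1 - s ^ 2 * ‖z‖ ^ 2)

variable {s : ℝ} {z : ℂ}

lemma one_sub_mul_norm_pos (hs : s < 1) (hz : ‖z‖ < 1) : 0 < 1 - s * ‖z‖ := by
  nlinarith [norm_nonneg z]

lemma one_sub_sq_mul_norm_sq_pos (hs0 : 0 ≤ s) (hs : s < 1) (hz : ‖z‖ < 1) :
    0 < 1 - s ^ 2 * ‖z‖ ^ 2 := by
  have : 0 < (1 - s * ‖z‖) * (1 + s * ‖z‖) :=
    mul_pos (one_sub_mul_norm_pos hs hz) (by positivity)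
  linarith

lemma norm_pseudohyperbolicCenter (hs0 : 0 ≤ s) (hs : s < 1) (hz : ‖z‖ < 1) :
    ‖pseudohyperbolicCenter s z‖ = (1 - s ^ 2) / (1 - s ^ 2 * ‖z‖ ^ 2) * ‖z‖ := by
  have hq := one_sub_sq_mul_norm_sq_pos hs0 hs hz
  have : 0 ≤ 1 - s ^ 2 := by nlinarith
  rw [pseudohyperbolicCenter, norm_smul, Real.norm_of_nonneg (by positivity)]

lemma norm_pseudohyperbolicCenter_sub_radius (hs0 : 0 ≤ s) (hs : s < 1) (hz : ‖z‖ < 1) :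
    ‖pseudohyperbolicCenter s z‖ - pseudohyperbolicRadius s z =
      (‖z‖ - s) / (1 - s * ‖z‖) := by
  have hq := one_sub_sq_mul_norm_sq_pos hs0 hs hz
  have hq' := one_sub_mul_norm_pos hs hz
  rw [norm_pseudohyperbolicCenter hs0 hs hz, pseudohyperbolicRadius]
  field_simp
  ring

lemma norm_pseudohyperbolicCenter_add_radius (hs0 : 0 ≤ s) (hs : s < 1) (hz : ‖z‖ < 1) :
    ‖pseudohyperbolicCenter s z‖ + pseudohyperbolicRadius s z =
      (‖z‖ + s) / (1 + s * ‖z‖) := by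
  have hq := one_sub_sq_mul_norm_sq_pos hs0 hs hz
  have : 0 < 1 + s * ‖z‖ := by positivity
  rw [norm_pseudohyperbolicCenter hs0 hs hz, pseudohyperbolicRadius]
  field_simp
  ring

lemma norm_pseudohyperbolicCenter_add_radius_lt_one (hs0 : 0 ≤ s) (hs : s < 1) (hz : ‖z‖ < 1) :
    ‖pseudohyperbolicCenter s z‖ + pseudohyperbolicRadius s z < 1 := by
  rw [norm_pseudohyperbolicCenter_add_radius hs0 hs hz, div_lt_one (by positivity)]
  nlinarith

lemma mul_one_sub_norm_le_pseudohyperbolicRadius (hs0 : 0 ≤ s) (hs : s < 1) (hz : ‖z‖ < 1) :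
    s * (1 - ‖z‖) ≤ pseudohyperbolicRadius s z := by
  have : 0 ≤ 1 - ‖z‖ := by linarith
  rw [pseudohyperbolicRadius, le_div_iff₀ (one_sub_sq_mul_norm_sq_pos hs0 hs hz)]
  calc s * (1 - ‖z‖) * (1 - s ^ 2 * ‖z‖ ^ 2) ≤ s * (1 - ‖z‖) * 1 := by
        gcongr
        exact sub_le_self _ (by positivity)
    _ ≤ s * (1 - ‖z‖ ^ 2) := by
        rw [mul_one]
        gcongr
        nlinarith [norm_nonneg z]

lemma mul_norm_sub_pseudohyperbolicCenter_sq_sub_radius_sq (w : ℂ)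
    (hq : 1 - s ^ 2 * ‖z‖ ^ 2 ≠ 0) :
    (1 - s ^ 2 * ‖z‖ ^ 2) * (‖w - pseudohyperbolicCenter s z‖ ^ 2 -
        pseudohyperbolicRadius s z ^ 2) =
      ‖z - w‖ ^ 2 - s ^ 2 * ‖1 - (starRingEnd ℂ) w * z‖ ^ 2 := by
  rw [pseudohyperbolicCenter, pseudohyperbolicRadius]
  simp only [← Complex.normSq_eq_norm_sq, Complex.normSq_apply, ← sq] at hq ⊢
  simp only [Complex.sub_re, Complex.sub_im, Complex.smul_re, Complex.smul_im, smul_eq_mul,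
    Complex.mul_re, Complex.mul_im, Complex.conj_re, Complex.conj_im, Complex.one_re,
    Complex.one_im]
  field_simp
  ring

lemma norm_div_one_sub_conj_mul_lt_iff {w : ℂ} (hs0 : 0 ≤ s) (hs : s < 1) (hz : ‖z‖ < 1)
    (hw : ‖w‖ < 1) :
    ‖(z - w) / (1 - (starRingEnd ℂ) w * z)‖ < s ↔
      w ∈ Metric.ball (pseudohyperbolicCenter s z) (pseudohyperbolicRadius s z) := by
  have hq := one_sub_sq_mul_norm_sq_pos hs0 hs hz
  have hR : 0 ≤ pseudohyperbolicRadius s z :=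
    (mul_nonneg hs0 (by linarith)).trans (mul_one_sub_norm_le_pseudohyperbolicRadius hs0 hs hz)
  have hden : 0 < ‖1 - (starRingEnd ℂ) w * z‖ := by
    refine norm_pos_iff.2 (sub_ne_zero.2 fun h ↦ ?_)
    have : ‖w‖ * ‖z‖ = 1 := by rw [← RCLike.norm_conj w, ← norm_mul, ← h, norm_one]
    nlinarith [norm_nonneg z, norm_nonneg w]
  rw [norm_div, div_lt_iff₀ hden, mem_ball_iff_norm,
    ← pow_lt_pow_iff_left₀ (norm_nonneg _) (by positivity) two_ne_zero, mul_pow, ← sub_neg,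
    ← mul_norm_sub_pseudohyperbolicCenter_sq_sub_radius_sq w hq.ne', ← smul_eq_mul,
    smul_neg_iff_of_pos_left hq,
    sub_neg, pow_lt_pow_iff_left₀ (norm_nonneg _) hR two_ne_zero]

end PseudohyperbolicDisc

lemma tanh_one_pos : 0 < Real.tanh 1 := by
  rw [Real.tanh_eq_sinh_div_cosh]
  exact div_pos (Real.sinh_pos_iff.2 one_pos) (Real.cosh_pos 1)

lemma Dball_eq_ball {z : ℂ} (hz : ‖z‖ < 1) :
    Dball z = Metric.ball (pseudohyperbolicCenter (Real.tanh 1) z)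
      (pseudohyperbolicRadius (Real.tanh 1) z) := by
  have hs0 := tanh_one_pos.le
  have hs := Real.tanh_lt_one 1
  ext w
  rw [Dball, mem_ofPred_eq]
  refine ⟨fun ⟨hw, h⟩ ↦ (norm_div_one_sub_conj_mul_lt_iff hs0 hs hz hw).1 h, fun h ↦ ?_⟩
  have hw : ‖w‖ < 1 := by
    have := (norm_sub_norm_le _ _).trans_lt (mem_ball_iff_norm.1 h)
    linarith [norm_pseudohyperbolicCenter_add_radius_lt_one hs0 hs hz]
  exact ⟨hw, (norm_div_one_sub_conj_mul_lt_iff hs0 hs hz hw).2 h⟩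

lemma abs_setIntegral_Dball_fEx_le {b β : ℝ} {z : ℂ} (hb : b ≠ 0) (hβ : -1 ≤ β)
    (hz0 : (1 + 2 * Real.tanh 1) / (2 + Real.tanh 1) ≤ ‖z‖) (hz : ‖z‖ < 1) :
    |∫ w in Dball z, fEx b β w ∂dA| ≤
      2 / |b| * ((1 + Real.tanh 1) / (1 - Real.tanh 1)) ^ (2 + β) * (1 - ‖z‖) ^ (2 + β) := by
  have hs0 := tanh_one_pos
  have hs := Real.tanh_lt_one 1
  rw [Dball_eq_ball hz]
  set s := Real.tanh 1
  have hq := one_sub_mul_norm_pos hs hz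
  have hz' : 0 < 1 - ‖z‖ := by linarith
  have hs' : 0 < 1 - s := by linarith
  have hinner : 1 / 2 ≤ ‖pseudohyperbolicCenter s z‖ - pseudohyperbolicRadius s z := by
    rw [div_le_iff₀ (by positivity)] at hz0
    rw [norm_pseudohyperbolicCenter_sub_radius hs0.le hs hz, div_le_div_iff₀ two_pos hq]
    linarith
  have houter := norm_pseudohyperbolicCenter_add_radius_lt_one hs0.le hs hz
  have hR := (mul_pos hs0 hz').le.trans (mul_one_sub_norm_le_pseudohyperbolicRadius hs0.le hs hz)
  have depth_le : 1 - (‖pseudohyperbolicCenter s z‖ - pseudohyperbolicRadius s z) ≤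
      (1 + s) / (1 - s) * (1 - ‖z‖) :=
    calc _ = (1 + s) * (1 - ‖z‖) / (1 - s * ‖z‖) := by
          rw [norm_pseudohyperbolicCenter_sub_radius hs0.le hs hz]
          rw [eq_div_iff hq.ne', sub_mul, div_mul_cancel₀ _ hq.ne']
          ring
      _ ≤ (1 + s) * (1 - ‖z‖) / (1 - s) := by
          gcongr
          exact mul_le_of_le_one_right hs0.le hz.le
      _ = (1 + s) / (1 - s) * (1 - ‖z‖) := by ring
  calc _ ≤ 2 / |b| * (1 - (‖pseudohyperbolicCenter s z‖ - pseudohyperbolicRadius s z)) ^ (2 + β) :=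
        abs_setIntegral_ball_fEx_le hb hβ hR hinner houter
    _ ≤ 2 / |b| * ((1 + s) / (1 - s) * (1 - ‖z‖)) ^ (2 + β) := by
        gcongr <;> linarith
    _ = _ := by rw [Real.mul_rpow (by positivity) hz'.le, mul_assoc]

lemma sq_tanh_one_mul_one_sub_norm_le_dA_Dball {z : ℂ} (hz : ‖z‖ < 1) :
    (Real.tanh 1 * (1 - ‖z‖)) ^ 2 ≤ (dA (Dball z)).toReal := by
  have hle := mul_one_sub_norm_le_pseudohyperbolicRadius tanh_one_pos.le (Real.tanh_lt_one 1) hz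
  have hpos : 0 ≤ Real.tanh 1 * (1 - ‖z‖) := mul_nonneg tanh_one_pos.le (by linarith)
  rw [Dball_eq_ball hz, dA_ball, ENNReal.toReal_pow, ENNReal.toReal_ofReal (hpos.trans hle)]
  gcongr

lemma abs_avg1_le {f : ℂ → ℝ} {z : ℂ} {C β : ℝ} (hz : ‖z‖ < 1)
    (hf : |∫ w in Dball z, f w ∂dA| ≤ C * (1 - ‖z‖) ^ (2 + β)) :
    |avg1 f z| ≤ C / Real.tanh 1 ^ 2 * (1 - ‖z‖) ^ β := by
  have hs0 := tanh_one_pos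
  have hz' : 0 < 1 - ‖z‖ := by linarith
  rw [avg1, abs_mul, abs_of_nonneg (inv_nonneg.2 ENNReal.toReal_nonneg)]
  calc _ ≤ ((Real.tanh 1 * (1 - ‖z‖)) ^ 2)⁻¹ * (C * (1 - ‖z‖) ^ (2 + β)) := by
        gcongr
        exact sq_tanh_one_mul_one_sub_norm_le_dA_Dball hz
    _ = C / Real.tanh 1 ^ 2 * (1 - ‖z‖) ^ β := by
        rw [Real.rpow_add hz', Real.rpow_two]
        field_simp

lemma exists_pos_forall_mul_rpow_le {β ε : ℝ} (C : ℝ) (hβ : 0 < β) (hε : 0 < ε) :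
    ∃ δ > 0, ∀ t, 0 ≤ t → t ≤ δ → C * t ^ β ≤ ε := by
  have hcont : Filter.Tendsto (fun t : ℝ ↦ C * t ^ β) (nhds 0) (nhds 0) := by
    simpa only [Real.zero_rpow hβ.ne', mul_zero] using
      ((Real.continuous_rpow_const hβ.le).const_mul C).tendsto 0
  obtain ⟨δ, hδ, hlt⟩ := Metric.eventually_nhds_iff.1 (hcont.eventually_lt_const hε)
  refine ⟨δ / 2, half_pos hδ, fun t ht htδ ↦ (hlt ?_).le⟩
  rw [Real.dist_0_eq_abs, abs_of_nonneg ht]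
  linarith

theorem example_hyperbolic_average_general (b β : ℝ) (hb : b ≠ 0) (hβ : 0 < β) :
    ∃ r₀ ∈ Set.Ioo (0:ℝ) 1, ∃ C > (0:ℝ),
      (∀ z : ℂ, r₀ ≤ ‖z‖ → ‖z‖ < 1 →
        |∫ w in Dball z, fEx b β w ∂dA| ≤ C * (1 - ‖z‖) ^ (2 + β)) ∧
      ∃ C' > (0:ℝ),
        (∀ z : ℂ, r₀ ≤ ‖z‖ → ‖z‖ < 1 →
          |avg1 (fEx b β) z| ≤ C' * (1 - ‖z‖) ^ β) ∧
        (∀ ε > (0:ℝ), ∃ r₁ < (1:ℝ), ∀ z : ℂ, r₁ ≤ ‖z‖ → ‖z‖ < 1 →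
          |avg1 (fEx b β) z| ≤ ε) := by
  have hs0 := tanh_one_pos
  have hs : 0 < 1 - Real.tanh 1 := sub_pos.2 (Real.tanh_lt_one 1)
  -- The inner edge of `D(r₀, 1)` is the point `1 / 2`.
  set r₀ := (1 + 2 * Real.tanh 1) / (2 + Real.tanh 1)
  set C := 2 / |b| * ((1 + Real.tanh 1) / (1 - Real.tanh 1)) ^ (2 + β)
  have hr₀ : r₀ < 1 := (div_lt_one (by positivity)).2 (by linarith)
  have integral_le : ∀ z : ℂ, r₀ ≤ ‖z‖ → ‖z‖ < 1 →
      |∫ w in Dball z, fEx b β w ∂dA| ≤ C * (1 - ‖z‖) ^ (2 + β) := fun _ hz0 hz ↦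
    abs_setIntegral_Dball_fEx_le hb (by linarith) hz0 hz
  have average_le : ∀ z : ℂ, r₀ ≤ ‖z‖ → ‖z‖ < 1 →
      |avg1 (fEx b β) z| ≤ C / Real.tanh 1 ^ 2 * (1 - ‖z‖) ^ β := fun z hz0 hz ↦
    abs_avg1_le hz (integral_le z hz0 hz)
  refine ⟨r₀, ⟨by positivity, hr₀⟩, C, by positivity, integral_le,
    C / Real.tanh 1 ^ 2, by positivity, average_le, fun ε hε ↦ ?_⟩
  obtain ⟨δ, hδ, hle⟩ := exists_pos_forall_mul_rpow_le (C / Real.tanh 1 ^ 2) hβ hε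
  refine ⟨max r₀ (1 - δ), max_lt hr₀ (by linarith), fun z hz0 hz ↦ ?_⟩
  exact (average_le z (le_of_max_le_left hz0) hz).trans
    (hle _ (by linarith) (by linarith [le_of_max_le_right hz0]))

/-- For `b ≥ β > 0` and the example symbol `f = fEx b β`, there exist
`r₀ ∈ (0,1)` and `C > 0` such that `|∫_{D(z,1)} f dA| ≤ C (1-r)^{2+β}` whenever
`r = |z| ≥ r₀`; in particular the hyperbolic average satisfies
`|f̂₁(z)| ≤ C' (1-r)^β` for some `C' > 0`, so `f̂₁(z) → 0` as `|z| → 1`. -/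
theorem example_hyperbolic_average (b β : ℝ) (hβ : 0 < β) (hbβ : β ≤ b) :
    ∃ r₀ ∈ Set.Ioo (0:ℝ) 1, ∃ C > (0:ℝ),
      (∀ z : ℂ, r₀ ≤ ‖z‖ → ‖z‖ < 1 →
        |∫ w in Dball z, fEx b β w ∂dA| ≤ C * (1 - ‖z‖) ^ (2 + β)) ∧
      ∃ C' > (0:ℝ),
        (∀ z : ℂ, r₀ ≤ ‖z‖ → ‖z‖ < 1 →
          |avg1 (fEx b β) z| ≤ C' * (1 - ‖z‖) ^ β) ∧
        (∀ ε > (0:ℝ), ∃ r₁ < (1:ℝ), ∀ z : ℂ, r₁ ≤ ‖z‖ → ‖z‖ < 1 →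
          |avg1 (fEx b β) z| ≤ ε) := by
  exact example_hyperbolic_average_general b β (hβ.trans_le hbβ).ne' hβ
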